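/- For a finite index set I with a reflexive symmetric relation ~, any probability mass function on L^I (L countable) of the form p(x) = ∏_{cliques C} φ_C(x_C) with strictly positive clique interaction functions φ_C satisfies the local Markov property: p(X_i = x_i | X_j = x_j, j ≠ i) depends only on x_i and (x_j)_{j ∈ ∂(i)} where ∂(i) = {j ≠ i : j ~ i}. -/

import Mathlib

open scoped Classical

/-!
The factors whose index set avoids `i` do not see the value at `i`, so they come out of the
normalising sum `∑ b, p (update x i b)` and cancel in the conditional probability at `i`. What is
left is the product of the factors through `i`, and a clique through `i` consists of `i` and some of
its neighbours. The normalising sums are nonzero because the weights are positive and summable.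
-/

section GibbsWeight

variable {I M : Type*} {α : I → Type*} [CommMonoid M]

/-- The unnormalised Gibbs weight with interactions `φ C`, where `C` ranges over a finite family `𝒞`
of finite sets of sites, not necessarily the cliques of a relation. An interaction takes the whole
configuration as argument; that it only involves the sites of `C` is expressed by `DependsOn`. -/
def gibbsWeight (𝒞 : Finset (Finset I)) (φ : Finset I → (Π j, α j) → M) (x : Π j, α j) : M :=
  ∏ C ∈ 𝒞, φ C x

theorem dependsOn_gibbsWeight {𝒞 : Finset (Finset I)} {φ : Finset I → (Π j, α j) → M} {s : Set I}
    (hφ : ∀ C ∈ 𝒞, DependsOn (φ C) s) : DependsOn (gibbsWeight 𝒞 φ) s :=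
  fun _ _ hxy => Finset.prod_congr rfl fun C hC => hφ C hC hxy

theorem gibbsWeight_filter_mul_gibbsWeight_filter_not (𝒞 : Finset (Finset I))
    (φ : Finset I → (Π j, α j) → M) (P : Finset I → Prop) [DecidablePred P] :
    gibbsWeight (𝒞.filter P) φ * gibbsWeight (𝒞.filter (¬ P ·)) φ = gibbsWeight 𝒞 φ :=
  funext fun x => Finset.prod_filter_mul_prod_filter_not 𝒞 P (φ · x)

end GibbsWeight

section SiteConditional

variable {I K : Type*} {α : I → Type*} [DecidableEq I]

/-- The marginal weight of the configuration `x` outside the site `i`; for a probability mass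
function `p` this is `ℙ(X_j = x_j, j ≠ i)`. It is a `tsum`, hence `0` if the weights are not
summable. -/
noncomputable def marginalOff [AddCommMonoid K] [TopologicalSpace K] (p : (Π j, α j) → K) (i : I)
    (x : Π j, α j) : K :=
  ∑' b : α i, p (Function.update x i b)

/-- The single-site conditional distribution `ℙ(X_i = a | X_j = x_j, j ≠ i)` of a weight `p`, which
need not be normalised. It is `0` by convention where `marginalOff p i x = 0`. -/
noncomputable def siteConditional [DivisionSemiring K] [TopologicalSpace K] (p : (Π j, α j) → K)
    (i : I) (x : Π j, α j) (a : α i) : K :=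
  p (Function.update x i a) / marginalOff p i x

theorem marginalOff_pos [AddCommGroup K] [PartialOrder K] [IsOrderedAddMonoid K] [UniformSpace K]
    [IsUniformAddGroup K] [CompleteSpace K] [OrderClosedTopology K] {p : (Π j, α j) → K}
    (hpos : ∀ x, 0 < p x) (hsum : Summable p) (i : I) (x : Π j, α j) : 0 < marginalOff p i x :=
  (hsum.comp_injective (Function.update_injective x i)).tsum_pos (fun _ => (hpos _).le) (x i)
    (hpos _)

theorem apply_update_of_dependsOn_compl {f : (Π j, α j) → K} {i : I} (hf : DependsOn f {i}ᶜ)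
    (x : Π j, α j) (b : α i) : f (Function.update x i b) = f x :=
  hf fun _ hj => Function.update_of_ne hj _ _

theorem apply_update_congr_of_dependsOn {f : (Π j, α j) → K} {s : Set I} (hf : DependsOn f s)
    {i : I} {x y : Π j, α j} (hxy : ∀ j ∈ s, j ≠ i → x j = y j) (b : α i) :
    f (Function.update x i b) = f (Function.update y i b) := by
  refine hf fun j hj => ?_
  obtain rfl | hji := eq_or_ne j i
  · simp only [Function.update_self]
  · simpa only [Function.update_of_ne hji] using hxy j hj hji

theorem siteConditional_congr [DivisionSemiring K] [TopologicalSpace K] {p : (Π j, α j) → K}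
    {s : Set I} (hp : DependsOn p s) {i : I} {x y : Π j, α j}
    (hxy : ∀ j ∈ s, j ≠ i → x j = y j) : siteConditional p i x = siteConditional p i y := by
  funext a
  simp only [siteConditional, marginalOff, apply_update_congr_of_dependsOn hp hxy]

theorem marginalOff_mul_of_dependsOn_compl [DivisionSemiring K] [TopologicalSpace K]
    [IsTopologicalSemiring K] [T2Space K] {f : (Π j, α j) → K} {i : I} (hf : DependsOn f {i}ᶜ)
    (g : (Π j, α j) → K) (x : Π j, α j) :
    marginalOff (f * g) i x = f x * marginalOff g i x := by
  simp only [marginalOff, Pi.mul_apply, apply_update_of_dependsOn_compl hf, tsum_mul_left]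

theorem siteConditional_mul_of_dependsOn_compl [Semifield K] [TopologicalSpace K]
    [IsTopologicalSemiring K] [T2Space K] {f : (Π j, α j) → K} {i : I} (hf : DependsOn f {i}ᶜ)
    (g : (Π j, α j) → K) {x : Π j, α j} (hx : f x ≠ 0) :
    siteConditional (f * g) i x = siteConditional g i x := by
  funext a
  rw [siteConditional, marginalOff_mul_of_dependsOn_compl hf, Pi.mul_apply,
    apply_update_of_dependsOn_compl hf, mul_div_mul_left _ _ hx, siteConditional]

end SiteConditional

section LocalMarkov

variable {I K : Type*} {α : I → Type*} [DecidableEq I] [Semifield K] [TopologicalSpace K]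
  [IsTopologicalSemiring K] [T2Space K] {𝒞 : Finset (Finset I)} {φ : Finset I → (Π j, α j) → K}

theorem siteConditional_gibbsWeight_eq_filter_mem (hφ : ∀ C ∈ 𝒞, DependsOn (φ C) (C : Set I))
    {i : I} {x : Π j, α j} (hx : marginalOff (gibbsWeight 𝒞 φ) i x ≠ 0) :
    siteConditional (gibbsWeight 𝒞 φ) i x
      = siteConditional (gibbsWeight (𝒞.filter (i ∈ ·)) φ) i x := by
  have hoff : DependsOn (gibbsWeight (𝒞.filter (i ∉ ·)) φ) {i}ᶜ :=
    dependsOn_gibbsWeight fun C hC =>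
      (hφ C (Finset.mem_of_mem_filter C hC)).mono
        (Set.subset_compl_singleton_iff.mpr (Finset.mem_filter.mp hC).2)
  rw [← gibbsWeight_filter_mul_gibbsWeight_filter_not 𝒞 φ (i ∈ ·), mul_comm] at hx ⊢
  rw [marginalOff_mul_of_dependsOn_compl hoff] at hx
  exact siteConditional_mul_of_dependsOn_compl hoff _ (left_ne_zero_of_mul hx)

theorem gibbs_implies_local_markov_general (hφ : ∀ C ∈ 𝒞, DependsOn (φ C) (C : Set I)) {i : I}
    {x y : Π j, α j} (hx : marginalOff (gibbsWeight 𝒞 φ) i x ≠ 0)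
    (hy : marginalOff (gibbsWeight 𝒞 φ) i y ≠ 0)
    (hxy : ∀ C ∈ 𝒞, i ∈ C → ∀ j ∈ C, j ≠ i → x j = y j) :
    siteConditional (gibbsWeight 𝒞 φ) i x = siteConditional (gibbsWeight 𝒞 φ) i y := by
  have hthrough : DependsOn (gibbsWeight (𝒞.filter (i ∈ ·)) φ)
      {j | ∃ C ∈ 𝒞, i ∈ C ∧ j ∈ C} :=
    dependsOn_gibbsWeight fun C hC => by
      obtain ⟨hC, hi⟩ := Finset.mem_filter.mp hC
      exact (hφ C hC).mono fun j hj => ⟨C, hC, hi, hj⟩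
  rw [siteConditional_gibbsWeight_eq_filter_mem hφ hx,
    siteConditional_gibbsWeight_eq_filter_mem hφ hy]
  exact siteConditional_congr hthrough fun j ⟨C, hC, hi, hj⟩ => hxy C hC hi j hj

end LocalMarkov

/-- A Gibbs factorisation over the cliques of a reflexive symmetric relation on a finite
index set satisfies the local Markov property: the conditional probability of the value
at a site `i` given all other sites depends only on the values at the neighbours of `i`. -/
theorem gibbs_implies_local_markov {I L : Type*} [Fintype I] [DecidableEq I] [Countable L]
    (r : I → I → Prop) (hrefl : ∀ i, r i i) (hsymm : ∀ i j, r i j → r j i)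
    (φ : Finset I → (I → L) → ℝ)
    (hφpos : ∀ C x, 0 < φ C x)
    (hφloc : ∀ (C : Finset I) (x y : I → L), (∀ i ∈ C, x i = y i) → φ C x = φ C y)
    (p : (I → L) → ℝ)
    (hp : ∀ x, p x
      = ∏ C ∈ Finset.univ.powerset.filter (fun C : Finset I => ∀ i ∈ C, ∀ j ∈ C, r i j),
          φ C x)
    (hpmf : ∑' x : I → L, p x = 1)
    (i : I) (a : L) (x y : I → L)
    (hxy : ∀ j, j ≠ i → r j i → x j = y j) :
    p (Function.update x i a) / ∑' b : L, p (Function.update x i b)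
      = p (Function.update y i a) / ∑' b : L, p (Function.update y i b) := by
  obtain rfl : p = gibbsWeight _ φ := funext hp
  have hsum : Summable (gibbsWeight _ φ) :=
    by_contra fun h => one_ne_zero (hpmf.symm.trans (tsum_eq_zero_of_not_summable h))
  have hne : ∀ z, marginalOff (gibbsWeight _ φ) i z ≠ 0 := fun z =>
    (marginalOff_pos (fun z => Finset.prod_pos fun C _ => hφpos C z) hsum i z).ne'
  exact congrFun (gibbs_implies_local_markov_general (fun C _ => hφloc C) (hne x) (hne y)
    fun C hC hi j hj hji => hxy j hji ((Finset.mem_filter.mp hC).2 j hj i hi)) a
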